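/- Let S and A be nonempty finite sets and let f : ℝ^{S×A} → ℝ be continuously differentiable. Let θ ∈ ℝ^{S×A} and κ : S → [0,1], and define θ' by θ'(s,a) = κ(s)·θ(s,a) for all (s,a); for t ∈ [0,1] set ζ_t = (1−t)·θ + t·θ'. Assume that for every s ∈ S with κ(s) < 1 and every t ∈ [0,1], Σ_{a∈A} ζ_t(s,a)·(∂f/∂θ(s,a))(ζ_t) ≤ 0. Then f(θ') ≥ f(θ). -/

import Mathlib

open scoped BigOperators

/-!
Along the segment from `x` to its blockwise rescaling, each block of the moving point is a
nonnegative multiple of the corresponding block of `x`, and positive before the far endpoint. So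
the radial hypothesis passes from the moving point to the fixed blocks of `x`, and the displacement
is a combination of these blocks with coefficients `κ s - 1 ≤ 0`. The mean value theorem at an
interior point of the segment concludes.
-/

section MeanValue

variable {E : Type*} [NormedAddCommGroup E] [NormedSpace ℝ E]

-- Mathlib's `domain_mvt` only places the point in the closed segment; at the endpoint a block
-- rescaled by `0` vanishes and the radial hypothesis carries no information.
theorem exists_mem_openSegment_sub_eq_fderiv {f : E → ℝ} {x y : E}
    (hfc : ContinuousOn f (segment ℝ x y))
    (hfd : ∀ z ∈ openSegment ℝ x y, DifferentiableAt ℝ f z) :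
    ∃ z ∈ openSegment ℝ x y, f y - f x = fderiv ℝ f z (y - x) := by
  rw [segment_eq_image_lineMap] at hfc
  simp only [openSegment_eq_image_lineMap, Set.forall_mem_image, Set.exists_mem_image] at hfd ⊢
  obtain ⟨t, ht, hslope⟩ := exists_hasDerivAt_eq_slope (f ∘ AffineMap.lineMap x y)
    (fun t ↦ fderiv ℝ f (AffineMap.lineMap x y t) (y - x)) zero_lt_one
    (hfc.comp AffineMap.lineMap_continuous.continuousOn (Set.mapsTo_image _ _))
    (fun t ht ↦ (hfd ht).hasFDerivAt.comp_hasDerivAt t AffineMap.hasDerivAt_lineMap)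
  exact ⟨t, ht, by simpa using hslope.symm⟩

end MeanValue

section BlockRescale

variable {R M S : Type*} [CommRing R] [AddCommGroup M] [Module R M] [Fintype S]

/-- The endomorphism multiplying the `s`-th block of a vector by `κ s`. The decomposition into
blocks is encoded by its projections `P s`, meant to be complete orthogonal idempotents. -/
def blockRescale (P : S → Module.End R M) (κ : S → R) : Module.End R M :=
  ∑ s, κ s • P s

theorem blockRescale_apply (P : S → Module.End R M) (κ : S → R) (x : M) :
    blockRescale P κ x = ∑ s, κ s • P s x := by
  simp only [blockRescale, LinearMap.sum_apply, LinearMap.smul_apply]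

variable {P : S → Module.End R M}

theorem proj_blockRescale (hP : CompleteOrthogonalIdempotents P) (κ : S → R) (s : S) (x : M) :
    P s (blockRescale P κ x) = κ s • P s x := by
  classical
  have hmul (r : S) : P s (P r x) = if s = r then P s x else 0 := by
    rw [← Module.End.mul_apply, hP.mul_eq]
    split_ifs <;> rfl
  simp [blockRescale_apply, hmul]

theorem blockRescale_sub_self (hP : CompleteOrthogonalIdempotents P) (κ : S → R) (x : M) :
    blockRescale P κ x - x = ∑ s, (κ s - 1) • P s x := by
  have hx : ∑ s, P s x = x := by
    rw [← LinearMap.sum_apply, hP.complete, Module.End.one_apply]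
  simp only [blockRescale_apply, sub_smul, one_smul, Finset.sum_sub_distrib, hx]

theorem exists_pos_proj_eq_smul_of_mem_openSegment [PartialOrder R] [IsOrderedRing R]
    (hP : CompleteOrthogonalIdempotents P) {κ : S → R} {s : S} (hκ : 0 ≤ κ s) {x z : M}
    (hz : z ∈ openSegment R x (blockRescale P κ x)) :
    ∃ w : R, 0 < w ∧ P s z = w • P s x := by
  obtain ⟨a, b, ha, hb, -, rfl⟩ := hz
  refine ⟨a + b * κ s, add_pos_of_pos_of_nonneg ha (mul_nonneg hb.le hκ), ?_⟩
  rw [map_add, map_smul, map_smul, proj_blockRescale hP, add_smul, mul_smul]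

end BlockRescale

theorem stmt16_general {E S : Type*} [NormedAddCommGroup E] [NormedSpace ℝ E] [Fintype S]
    {P : S → Module.End ℝ E} (hP : CompleteOrthogonalIdempotents P)
    {f : E → ℝ} {x : E} {κ : S → ℝ} (hκ : ∀ s, 0 ≤ κ s ∧ κ s ≤ 1)
    (hfc : ContinuousOn f (segment ℝ x (blockRescale P κ x)))
    (hfd : ∀ z ∈ openSegment ℝ x (blockRescale P κ x), DifferentiableAt ℝ f z)
    (hrad : ∀ s, κ s < 1 → ∀ z ∈ openSegment ℝ x (blockRescale P κ x),
      fderiv ℝ f z (P s z) ≤ 0) :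
    f x ≤ f (blockRescale P κ x) := by
  obtain ⟨z, hz, hmvt⟩ := exists_mem_openSegment_sub_eq_fderiv hfc hfd
  have hblock (s : S) (hs : κ s < 1) : fderiv ℝ f z (P s x) ≤ 0 := by
    obtain ⟨w, hw, hPz⟩ := exists_pos_proj_eq_smul_of_mem_openSegment hP (hκ s).1 hz
    have hwx : w * fderiv ℝ f z (P s x) ≤ 0 := by
      simpa only [hPz, map_smul, smul_eq_mul] using hrad s hs z hz
    exact nonpos_of_mul_nonpos_right hwx hw
  rw [← sub_nonneg, hmvt, blockRescale_sub_self hP, map_sum]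
  refine Finset.sum_nonneg fun s _ ↦ ?_
  rw [map_smul, smul_eq_mul]
  obtain hs | hs := (hκ s).2.lt_or_eq
  · exact mul_nonneg_of_nonpos_of_nonpos (sub_nonpos.2 hs.le) (hblock s hs)
  · rw [hs, sub_self, zero_mul]

section FiberProj

variable {R ι S : Type*} [CommRing R] [DecidableEq S]

/-- The projection of `ι → R` onto the coordinates in the fiber of `b` over `s`: a map `b : ι → S`
encodes a partition of the coordinates into blocks indexed by `S`. -/
def fiberProj (b : ι → S) (s : S) : Module.End R (ι → R) where
  toFun x i := if b i = s then x i else 0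
  map_add' x y := by ext i; simp [← ite_add_zero]
  map_smul' c x := by ext i; simp

theorem fiberProj_apply (b : ι → S) (s : S) (x : ι → R) (i : ι) :
    fiberProj b s x i = if b i = s then x i else 0 :=
  rfl

theorem completeOrthogonalIdempotents_fiberProj [Fintype S] (b : ι → S) :
    CompleteOrthogonalIdempotents (fiberProj (R := R) b) where
  idem s := by
    ext x i
    simp only [Module.End.mul_apply, fiberProj_apply]
    split_ifs <;> rfl
  ortho s r hsr := by
    ext x i
    simp only [Module.End.mul_apply, fiberProj_apply, LinearMap.zero_apply, Pi.zero_apply]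
    grind
  complete := by
    ext x i
    simp [fiberProj_apply]

theorem blockRescale_fiberProj [Fintype S] (b : ι → S) (κ : S → R) (x : ι → R) :
    blockRescale (fiberProj b) κ x = fun i ↦ κ (b i) * x i := by
  ext i
  simp [blockRescale_apply, fiberProj_apply]

theorem map_fiberProj_fst {A M F : Type*} [Fintype A] [DecidableEq A]
    [AddCommGroup M] [Module R M] [FunLike F (S × A → R) M] [LinearMapClass F R (S × A → R) M]
    (L : F) (s : S) (x : S × A → R) :
    L (fiberProj Prod.fst s x) = ∑ a, x (s, a) • L (Pi.single (s, a) 1) := by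
  have hsum : fiberProj Prod.fst s x = ∑ a, x (s, a) • Pi.single (s, a) 1 := by
    ext ⟨r, a⟩
    by_cases hr : r = s <;> simp [fiberProj_apply, Pi.single_apply, hr]
  simp only [hsum, map_sum, map_smul]

end FiberProj

/-- If the gradient field is radial (points toward the origin) on each
rescaled block along the segment from `θ` to the blockwise rescaling
`θ' (s,a) = κ s * θ (s,a)`, then the rescaling does not decrease the objective. -/
theorem stmt16 {S A : Type*} [Fintype S] [Fintype A] [Nonempty S] [Nonempty A]
    [DecidableEq S] [DecidableEq A]
    (f : (S × A → ℝ) → ℝ) (hf : ContDiff ℝ 1 f)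
    (θ : S × A → ℝ) (κ : S → ℝ) (hκ : ∀ s, 0 ≤ κ s ∧ κ s ≤ 1)
    (hrad : ∀ s, κ s < 1 → ∀ t : ℝ, 0 ≤ t → t ≤ 1 →
      ∑ a : A,
          ((1 - t) • θ + t • (fun p : S × A => κ p.1 * θ p)) (s, a) *
            fderiv ℝ f ((1 - t) • θ + t • (fun p : S × A => κ p.1 * θ p))
              (Pi.single (s, a) 1) ≤ 0) :
    f θ ≤ f (fun p : S × A => κ p.1 * θ p) := by
  rw [← blockRescale_fiberProj Prod.fst κ θ] at hrad ⊢
  exact stmt16_general (completeOrthogonalIdempotents_fiberProj Prod.fst) hκ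
    hf.continuous.continuousOn (fun z _ ↦ hf.differentiable one_ne_zero z) fun s hs ↦
      openSegment_eq_image ℝ θ _ ▸ Set.forall_mem_image.2 fun t ht ↦
        (map_fiberProj_fst _ s _).trans_le (hrad s hs t ht.1.le ht.2.le)
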